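/- Let p be a prime and let Λ_p be the group presented by generators a, s, t and relators a^p, s t s⁻¹ t⁻¹, (t a t⁻¹) a (t a t⁻¹)⁻¹ a⁻¹, and (s a s⁻¹)⁻¹ (t a t⁻¹) a. Then Λ_p has quadratic Dehn function with respect to this presentation: there exists a constant C such that every word w in the free group on {a, s, t} representing the identity of Λ_p equals, in the free group, a product of at most C·|w|² + C conjugates of the four relators and their inverses. -/

import Mathlib

namespace Baumslag

/-- The generators of `Λ_p`: `a`, `s`, `t`. -/
inductive Gen : Type
  | a : Gen
  | s : Gen
  | t : Gen
deriving DecidableEq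

open Gen

/-- The relators of Baumslag's group
`Λ_p = ⟨a, s, t | aᵖ, [s,t], [tat⁻¹, a], sas⁻¹ = (tat⁻¹)a⟩`. -/
def LamRel (p : ℕ) : Set (FreeGroup Gen) :=
  { FreeGroup.of a ^ p,
    FreeGroup.of s * FreeGroup.of t * (FreeGroup.of s)⁻¹ * (FreeGroup.of t)⁻¹,
    (FreeGroup.of t * FreeGroup.of a * (FreeGroup.of t)⁻¹) * FreeGroup.of a *
      (FreeGroup.of t * FreeGroup.of a * (FreeGroup.of t)⁻¹)⁻¹ * (FreeGroup.of a)⁻¹,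
    (FreeGroup.of s * FreeGroup.of a * (FreeGroup.of s)⁻¹)⁻¹ *
      (FreeGroup.of t * FreeGroup.of a * (FreeGroup.of t)⁻¹) * FreeGroup.of a }

/-- Baumslag's finitely presented metabelian group `Λ_p`. -/
def Lam (p : ℕ) : Type := PresentedGroup (LamRel p)

instance (p : ℕ) : Group (Lam p) := by unfold Lam; infer_instance

end Baumslag

open Baumslag

/-!
`Λ_p` acts on a ring containing `(ZMod p)[X]`, with `a` translating by `1`, `t` multiplying by `X`
and `s` multiplying by `X + 1`. A polynomial is represented by its Horner word
`H_t = A c₀ · t · A c₁ · t ⋯ A cₙ · t · t⁻⁽ⁿ⁺¹⁾`, of length linear in the degree.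

The relators allow the direction `t` of a Horner word to be traded, at quadratic cost, for the
direction `s`, that direction `s⁻¹` for `s⁻¹ t`, and `(s⁻¹ t)⁻¹` for `t⁻¹`. Reading a Horner word
from its other end passes from a direction to its inverse, so going around the triangle relates a
Horner word in the direction `t` to the inverse of a Horner word in the same direction with its
letters in the opposite order; by faithfulness of the action its coefficients are the negatives of
the original ones. Applied to a concatenation this makes consecutive blocks of a Horner word commute
at quadratic cost, and divide and conquer then adds two polynomials at quadratic cost.

Splitting a word in two halves, normalising each and adding the results gives a recursion
`f (2 n) ≤ 2 f n + O(n²)` for the cost of a normal form, whence the quadratic Dehn function.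
-/

namespace Baumslag

section AreaBall

open scoped Pointwise

variable {G : Type*} [Group G] {R : Set G} {m n : ℕ} {u v w : G}

/-- The elements of `G` of area at most `n` over the relators `R`, that is, the products of at
most `n` conjugates of elements of `R` and of their inverses. The factor `1` makes these sets
increasing in `n`. -/
def areaBall (R : Set G) (n : ℕ) : Set G :=
  insert 1 (Group.conjugatesOfSet (R ∪ R⁻¹)) ^ n

lemma exists_conj_eq_of_mem_conjugatesOfSet {S : Set G} (hw : w ∈ Group.conjugatesOfSet S) :
    ∃ r ∈ S, ∃ c, c * r * c⁻¹ = w := by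
  simpa only [isConj_iff] using Group.mem_conjugatesOfSet_iff.1 hw

lemma areaBall_mono (R : Set G) : Monotone (areaBall R) := fun _ _ h =>
  Set.pow_subset_pow_right (Set.mem_insert _ _) h

lemma one_mem_areaBall (R : Set G) (n : ℕ) : 1 ∈ areaBall R n :=
  Set.one_mem_pow (Set.mem_insert _ _)

lemma mul_mem_areaBall (hu : u ∈ areaBall R m) (hv : v ∈ areaBall R n) :
    u * v ∈ areaBall R (m + n) := by
  rw [areaBall, pow_add]
  exact Set.mul_mem_mul hu hv

lemma conj_mem_areaBall (g : G) (hw : w ∈ areaBall R n) : g * w * g⁻¹ ∈ areaBall R n := by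
  have himage : MulAut.conj g '' areaBall R n ⊆ areaBall R n := by
    rw [areaBall, Set.image_pow, Set.image_insert_eq, map_one]
    refine Set.pow_subset_pow_left (Set.insert_subset_insert ?_)
    rintro _ ⟨x, hx, rfl⟩
    exact Group.conj_mem_conjugatesOfSet hx
  exact himage ⟨w, hw, rfl⟩

lemma inv_mem_areaBall (hw : w ∈ areaBall R n) : w⁻¹ ∈ areaBall R n := by
  have hinv : (insert 1 (Group.conjugatesOfSet (R ∪ R⁻¹)))⁻¹ ⊆
      insert 1 (Group.conjugatesOfSet (R ∪ R⁻¹)) := by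
    rw [Set.inv_insert, inv_one]
    refine Set.insert_subset_insert fun x hx => ?_
    obtain ⟨r, hr, c, hc⟩ := exists_conj_eq_of_mem_conjugatesOfSet hx
    rw [← inv_inv x, ← hc, conj_inv]
    exact Group.conj_mem_conjugatesOfSet
      (Group.subset_conjugatesOfSet (by simpa [or_comm] using hr))
  exact Set.pow_subset_pow_left hinv (by rwa [inv_pow, Set.mem_inv, inv_inv])

lemma subset_areaBall_one (R : Set G) : R ⊆ areaBall R 1 := fun r hr => by
  rw [areaBall, pow_one]
  exact Or.inr (Group.subset_conjugatesOfSet (Or.inl hr))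

lemma areaBall_areaBall_subset (R : Set G) (m n : ℕ) :
    areaBall (areaBall R m) n ⊆ areaBall R (m * n) := by
  have hfactor : insert 1 (Group.conjugatesOfSet (areaBall R m ∪ (areaBall R m)⁻¹)) ⊆
      areaBall R m := by
    refine Set.insert_subset (one_mem_areaBall R m) fun w hw => ?_
    obtain ⟨r, hr, c, rfl⟩ := exists_conj_eq_of_mem_conjugatesOfSet hw
    refine conj_mem_areaBall c (hr.elim id fun hr' => ?_)
    simpa using inv_mem_areaBall hr'
  exact (Set.pow_subset_pow_left hfactor).trans_eq (pow_mul _ m n).symm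

lemma areaBall_subset_normalClosure (R : Set G) (n : ℕ) :
    areaBall R n ⊆ Subgroup.normalClosure R := by
  induction n with
  | zero => simp [areaBall]
  | succ n ih =>
    rw [areaBall, pow_succ]
    rintro _ ⟨u, hu, v, hv, rfl⟩
    refine mul_mem (ih hu) ?_
    rcases hv with rfl | hv
    · exact one_mem _
    obtain ⟨r, hr, c, rfl⟩ := exists_conj_eq_of_mem_conjugatesOfSet hv
    refine Subgroup.normalClosure_normal.conj_mem r ?_ c
    exact hr.elim (Subgroup.subset_normalClosure ·)
      fun hr' => inv_mem_iff.1 (Subgroup.subset_normalClosure hr')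

lemma exists_mem_areaBall (hw : w ∈ Subgroup.normalClosure R) : ∃ n, w ∈ areaBall R n := by
  induction hw using Subgroup.closure_induction with
  | mem w hw =>
    obtain ⟨r, hr, c, rfl⟩ := exists_conj_eq_of_mem_conjugatesOfSet hw
    exact ⟨1, conj_mem_areaBall c (subset_areaBall_one R hr)⟩
  | one => exact ⟨0, one_mem_areaBall R 0⟩
  | mul u v _ _ hu hv =>
    obtain ⟨m, hm⟩ := hu
    obtain ⟨n, hn⟩ := hv
    exact ⟨m + n, mul_mem_areaBall hm hn⟩
  | inv u _ hu =>
    obtain ⟨n, hn⟩ := hu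
    exact ⟨n, inv_mem_areaBall hn⟩

lemma exists_list_of_mem_areaBall (hw : w ∈ areaBall R n) :
    ∃ L : List (G × G), L.length ≤ n ∧ (∀ q ∈ L, q.2 ∈ R ∨ q.2⁻¹ ∈ R) ∧
      w = (L.map fun q => q.1 * q.2 * q.1⁻¹).prod := by
  induction n generalizing w with
  | zero => exact ⟨[], by simpa [areaBall] using hw⟩
  | succ n ih =>
    rw [areaBall, pow_succ'] at hw
    obtain ⟨u, hu, v, hv, rfl⟩ := hw
    obtain ⟨L, hlen, hL, rfl⟩ := ih hv
    rcases hu with rfl | hu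
    · exact ⟨L, by omega, hL, by simp⟩
    obtain ⟨r, hr, c, rfl⟩ := exists_conj_eq_of_mem_conjugatesOfSet hu
    exact ⟨(c, r) :: L, by simpa using hlen, List.forall_mem_cons.2 ⟨hr, hL⟩, by simp⟩

end AreaBall

/-- Equality up to `n` relators of `R`: the words `u` and `v` bound a disc diagram of area at
most `n`. -/
def EqWithin {G : Type*} [Group G] (R : Set G) (n : ℕ) (u v : G) : Prop := u * v⁻¹ ∈ areaBall R n

local notation:50 u:51 "≈[" R "," n "]" v:51 => EqWithin R n u v

namespace EqWithin

variable {G H : Type*} [Group G] [Group H] {R : Set G} {k m n : ℕ} {u u' v v' w : G}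

lemma mono (h : u ≈[R, m] v) (hmn : m ≤ n) : u ≈[R, n] v := areaBall_mono R hmn h

lemma refl (u : G) : u ≈[R, n] u := by
  simpa [EqWithin] using one_mem_areaBall R n

lemma symm (h : u ≈[R, n] v) : v ≈[R, n] u := by
  simpa [EqWithin] using inv_mem_areaBall h

lemma trans (h : u ≈[R, m] v) (h' : v ≈[R, n] w) : u ≈[R, m + n] w := by
  simpa [EqWithin] using mul_mem_areaBall h h'

instance : Trans (EqWithin R m) (EqWithin R n) (EqWithin R (m + n)) := ⟨trans⟩

lemma mul_left (x : G) (h : u ≈[R, n] v) : x * u ≈[R, n] x * v := by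
  simpa [EqWithin, mul_assoc] using conj_mem_areaBall x h

lemma mul_right (x : G) (h : u ≈[R, n] v) : u * x ≈[R, n] v * x := by
  simpa [EqWithin, mul_assoc] using h

lemma mul (h : u ≈[R, m] v) (h' : u' ≈[R, n] v') : u * u' ≈[R, m + n] v * v' :=
  (h.mul_right u').trans (h'.mul_left v)

lemma inv (h : u ≈[R, n] v) : u⁻¹ ≈[R, n] v⁻¹ := by
  simpa [mul_assoc] using (h.symm.mul_left u⁻¹).mul_right v⁻¹

lemma conj (x : G) (h : u ≈[R, n] v) : x * u * x⁻¹ ≈[R, n] x * v * x⁻¹ :=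
  (h.mul_left x).mul_right x⁻¹

lemma mem_areaBall_of_mul_left (h : u * w ≈[R, n] u) : w ∈ areaBall R n := by
  simpa [mul_assoc] using conj_mem_areaBall u⁻¹ h

lemma of_areaBall (h : u ≈[R, n] v) : u ≈[areaBall R n, 1] v :=
  subset_areaBall_one _ h

lemma map_eq (φ : G →* H) (hR : ∀ r ∈ R, φ r = 1) (h : u ≈[R, n] v) : φ u = φ v := by
  have hker : Subgroup.normalClosure R ≤ φ.ker := Subgroup.normalClosure_le_normal hR
  have huv := hker (areaBall_subset_normalClosure R n h)
  rwa [MonoidHom.mem_ker, map_mul, map_inv, mul_inv_eq_one] at huv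

lemma eventually_of_map_eq (φ : G →* H) (hker : φ.ker ≤ Subgroup.normalClosure R)
    (h : φ u = φ v) : ∀ᶠ n in Filter.atTop, u ≈[R, n] v := by
  have huv : u * v⁻¹ ∈ φ.ker := by
    rw [MonoidHom.mem_ker, map_mul, map_inv, h, mul_inv_cancel]
  obtain ⟨n, hn⟩ := exists_mem_areaBall (hker huv)
  exact Filter.eventually_atTop.2 ⟨n, fun _ hnm => areaBall_mono R hnm hn⟩

lemma inv_comm (h : u * v ≈[R, n] v * u) : u⁻¹ * v ≈[R, n] v * u⁻¹ := by
  simpa [mul_assoc] using (h.symm.mul_left u⁻¹).mul_right u⁻¹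

lemma pow_comm (h : u * v ≈[R, k] v * u) (n : ℕ) : u ^ n * v ≈[R, n * k] v * u ^ n := by
  induction n with
  | zero => simpa using refl v
  | succ n ih =>
    refine mono ?_ (Nat.succ_mul n k).ge
    calc u ^ (n + 1) * v
      _ = u * (u ^ n * v) := by rw [pow_succ', mul_assoc]
      _ ≈[R, n * k] u * (v * u ^ n) := ih.mul_left u
      _ = u * v * u ^ n := (mul_assoc _ _ _).symm
      _ ≈[R, k] v * u * u ^ n := h.mul_right _
      _ = v * u ^ (n + 1) := by rw [pow_succ', mul_assoc]

lemma pow_pow_comm (h : u * v ≈[R, k] v * u) (m n : ℕ) :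
    u ^ m * v ^ n ≈[R, n * (m * k)] v ^ n * u ^ m :=
  (pow_comm (pow_comm h m).symm n).symm

lemma pow_mul_pow_mul_pow_mul_pow (h : v * u ≈[R, 1] u * v) (i j i' j' : ℕ) :
    u ^ i * v ^ j * (u ^ i' * v ^ j') ≈[R, j * i'] u ^ (i + i') * v ^ (j + j') := by
  have hcomm := ((h.pow_pow_comm j i').mul_left (u ^ i)).mul_right (v ^ j')
  rw [mul_one, mul_comm i' j] at hcomm
  simpa only [pow_add, mul_assoc] using hcomm

lemma pow_mul_pow_comm (h : v * u ≈[R, 1] u * v) (i j i' j' : ℕ) :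
    u ^ i * v ^ j * (u ^ i' * v ^ j') ≈[R, j * i' + j' * i] u ^ i' * v ^ j' * (u ^ i * v ^ j) := by
  refine (pow_mul_pow_mul_pow_mul_pow h i j i' j').trans ?_
  simpa only [add_comm] using (pow_mul_pow_mul_pow_mul_pow h i' j' i j).symm

lemma mul_pow_of_comm (h : u * v ≈[R, k] v * u) (n : ℕ) :
    (u * v) ^ n ≈[R, n ^ 2 * k] u ^ n * v ^ n := by
  induction n with
  | zero => simpa using refl 1
  | succ n ih =>
    refine mono (n := (n + 1) ^ 2 * k) ?_ (m := n ^ 2 * k + n * k) (by nlinarith)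
    calc (u * v) ^ (n + 1)
      _ = u * v * (u * v) ^ n := pow_succ' _ _
      _ ≈[R, n ^ 2 * k] u * v * (u ^ n * v ^ n) := ih.mul_left _
      _ = u * (v * u ^ n) * v ^ n := by group
      _ ≈[R, n * k] u * (u ^ n * v) * v ^ n := ((h.pow_comm n).symm.mul_left u).mul_right _
      _ = u ^ (n + 1) * v ^ (n + 1) := by rw [pow_succ', pow_succ']; group

end EqWithin

section Horner

variable {G M : Type*} [Group G] {R : Set G} {A : M → G} {x y z : G} {f g : M → M}

/-- The Horner word `A c₀ · x · A c₁ · x ⋯ A cₙ · x · x⁻⁽ⁿ⁺¹⁾`, representing `∑ cᵢ xⁱ` when the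
image of `A` is written additively and `x` acts on it by conjugation. -/
def horner (A : M → G) (x : G) : List M → G
  | [] => 1
  | c :: l => A c * (x * horner A x l * x⁻¹)

lemma horner_append (A : M → G) (x : G) (l m : List M) :
    horner A x (l ++ m) =
      horner A x l * (x ^ l.length * horner A x m * (x ^ l.length)⁻¹) := by
  induction l with
  | nil => simp [horner]
  | cons c l ih =>
    simp only [List.cons_append, horner, ih, List.length_cons, pow_succ']
    group

/-- `A` is a homomorphism from the additive monoid `M` up to single relators of `R`. -/
structure IsHomWithinOne [AddMonoid M] (R : Set G) (A : M → G) : Prop where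
  map_zero : A 0 = 1
  map_add (c d : M) : A c * A d ≈[R, 1] A (c + d)

/-- Up to single relators of `R`, conjugation by `y` acts on the image of `A` as `f + g z`, and
`y` commutes with `z`. -/
structure ActsAs (R : Set G) (A : M → G) (y z : G) (f g : M → M) : Prop where
  conj (c : M) : y * A c * y⁻¹ ≈[R, 1] A (f c) * (z * A (g c) * z⁻¹)
  comm : y * z ≈[R, 1] z * y

section AddMonoid

variable [AddMonoid M]

lemma IsHomWithinOne.horner_replicate_zero (hA : IsHomWithinOne R A) (x : G) (n : ℕ) :
    horner A x (List.replicate n 0) = 1 := by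
  induction n with
  | zero => rfl
  | succ n ih => simp [List.replicate_succ, horner, ih, hA.map_zero]

lemma IsHomWithinOne.horner_append_replicate_zero (hA : IsHomWithinOne R A) (x : G) (l : List M)
    (n : ℕ) : horner A x (l ++ List.replicate n 0) = horner A x l := by
  rw [horner_append, hA.horner_replicate_zero, mul_one, mul_inv_cancel, mul_one]

lemma IsHomWithinOne.horner_replicate_zero_append (hA : IsHomWithinOne R A) (x : G) (n : ℕ)
    (l : List M) :
    horner A x (List.replicate n 0 ++ l) = x ^ n * horner A x l * (x ^ n)⁻¹ := by
  rw [horner_append, hA.horner_replicate_zero, List.length_replicate, one_mul]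

lemma IsHomWithinOne.mul_horner_cons (hA : IsHomWithinOne R A) (x : G) (c d : M) (l : List M) :
    A c * horner A x (d :: l) ≈[R, 1] horner A x ((c + d) :: l) := by
  simpa only [horner, mul_assoc] using (hA.map_add c d).mul_right (x * horner A x l * x⁻¹)

lemma ActsAs.exists_mul_horner (h : ActsAs R A y z f g) (hA : IsHomWithinOne R A) (l : List M) :
    ∃ l' : List M, l'.length = l.length + 1 ∧
      y * horner A z l ≈[R, 4 * l.length] horner A z l' * y := by
  induction l with
  | nil => exact ⟨[0], rfl, by simpa [horner, hA.map_zero] using .refl y⟩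
  | cons c l ih =>
    obtain ⟨l', hlen, ih⟩ := ih
    obtain ⟨d, l', rfl⟩ := List.exists_cons_of_length_eq_add_one hlen
    refine ⟨f c :: (g c + d) :: l', by simpa using hlen, ?_⟩
    refine EqWithin.mono ?_ (m := 1 + 1 + 4 * l.length + 1 + 1) (by rw [List.length_cons]; omega)
    calc y * horner A z (c :: l)
      _ = y * A c * y⁻¹ * (y * z * horner A z l * z⁻¹) := by rw [horner]; group
      _ ≈[R, 1] A (f c) * (z * A (g c) * z⁻¹) * (y * z * horner A z l * z⁻¹) :=
        (h.conj c).mul_right _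
      _ = A (f c) * (z * A (g c) * z⁻¹) * (y * z) * (horner A z l * z⁻¹) := by group
      _ ≈[R, 1] A (f c) * (z * A (g c) * z⁻¹) * (z * y) * (horner A z l * z⁻¹) :=
        (h.comm.mul_left _).mul_right _
      _ = A (f c) * z * A (g c) * (y * horner A z l) * z⁻¹ := by group
      _ ≈[R, 4 * l.length] A (f c) * z * A (g c) * (horner A z (d :: l') * y) * z⁻¹ :=
        (ih.mul_left _).mul_right _
      _ = A (f c) * z * (A (g c) * horner A z (d :: l')) * (y * z⁻¹) := by group
      _ ≈[R, 1] A (f c) * z * horner A z ((g c + d) :: l') * (y * z⁻¹) :=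
        ((hA.mul_horner_cons z _ _ _).mul_left _).mul_right _
      _ ≈[R, 1] A (f c) * z * horner A z ((g c + d) :: l') * (z⁻¹ * y) :=
        h.comm.symm.inv_comm.symm.mul_left _
      _ = horner A z (f c :: (g c + d) :: l') * y := by simp only [horner]; group

lemma ActsAs.exists_pow_mul_horner (h : ActsAs R A y z f g) (hA : IsHomWithinOne R A) (n : ℕ)
    (l : List M) :
    ∃ l' : List M, l'.length = l.length + n ∧
      y ^ n * horner A z l ≈[R, 4 * n * (l.length + n)] horner A z l' * y ^ n := by
  induction n with
  | zero => exact ⟨l, rfl, by simpa using .refl _⟩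
  | succ n ih =>
    obtain ⟨l₁, hlen₁, h₁⟩ := ih
    obtain ⟨l₂, hlen₂, h₂⟩ := h.exists_mul_horner hA l₁
    refine ⟨l₂, by omega, ?_⟩
    refine EqWithin.mono ?_ (m := 4 * n * (l.length + n) + 4 * l₁.length)
      (by rw [hlen₁]; nlinarith)
    calc y ^ (n + 1) * horner A z l
      _ = y * (y ^ n * horner A z l) := by rw [pow_succ', mul_assoc]
      _ ≈[R, 4 * n * (l.length + n)] y * (horner A z l₁ * y ^ n) := h₁.mul_left y
      _ = y * horner A z l₁ * y ^ n := (mul_assoc _ _ _).symm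
      _ ≈[R, 4 * l₁.length] horner A z l₂ * y * y ^ n := h₂.mul_right _
      _ = horner A z l₂ * y ^ (n + 1) := by rw [pow_succ', mul_assoc]

lemma ActsAs.exists_pow_mul_pow_mul_horner (h : ActsAs R A y z f g) (hA : IsHomWithinOne R A)
    (u v : ℕ) (l : List M) :
    ∃ l' : List M, l'.length = l.length + u + v ∧
      z ^ u * y ^ v * horner A z l ≈[R, 4 * v * (l.length + v)]
        horner A z l' * (z ^ u * y ^ v) := by
  obtain ⟨l', hlen, hl'⟩ := h.exists_pow_mul_horner hA v l
  refine ⟨List.replicate u 0 ++ l', by rw [List.length_append, List.length_replicate]; omega, ?_⟩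
  simpa [hA.horner_replicate_zero_append, mul_assoc] using hl'.mul_left (z ^ u)

lemma ActsAs.exists_horner (h : ActsAs R A y z f g) (hA : IsHomWithinOne R A) (l : List M) :
    ∃ l' : List M, l'.length = l.length ∧
      horner A y l ≈[R, 4 * l.length ^ 2] horner A z l' := by
  induction l with
  | nil => exact ⟨[], rfl, .refl _⟩
  | cons c l ih =>
    obtain ⟨l₁, hlen₁, h₁⟩ := ih
    obtain ⟨l₂, hlen₂, h₂⟩ := h.exists_mul_horner hA l₁
    obtain ⟨d, l₂, rfl⟩ := List.exists_cons_of_length_eq_add_one hlen₂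
    refine ⟨(c + d) :: l₂, by simpa [← hlen₁] using hlen₂, ?_⟩
    refine EqWithin.mono ?_ (m := 4 * l.length ^ 2 + 4 * l₁.length + 1)
      (by rw [hlen₁, List.length_cons]; nlinarith)
    calc horner A y (c :: l)
      _ = A c * y * horner A y l * y⁻¹ := by rw [horner]; group
      _ ≈[R, 4 * l.length ^ 2] A c * y * horner A z l₁ * y⁻¹ := (h₁.mul_left _).mul_right _
      _ = A c * (y * horner A z l₁) * y⁻¹ := by group
      _ ≈[R, 4 * l₁.length] A c * (horner A z (d :: l₂) * y) * y⁻¹ :=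
        (h₂.mul_left _).mul_right _
      _ = A c * horner A z (d :: l₂) := by group
      _ ≈[R, 1] horner A z ((c + d) :: l₂) := hA.mul_horner_cons z _ _ _

end AddMonoid

section AddGroup

variable [AddGroup M]

lemma IsHomWithinOne.map_neg (hA : IsHomWithinOne R A) (c : M) : (A c)⁻¹ ≈[R, 1] A (-c) := by
  simpa [hA.map_zero] using ((hA.map_add c (-c)).mul_left (A c)⁻¹).symm

lemma IsHomWithinOne.horner_eqWithin_reverse (hA : IsHomWithinOne R A) (y : G) {n : ℕ}
    {l : List M} (hl : l.length = n + 1) :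
    horner A y l ≈[R, n + 1]
      y ^ n * (horner A y⁻¹ (l.map Neg.neg).reverse)⁻¹ * (y ^ n)⁻¹ := by
  have hneg (c : M) : A c ≈[R, 1] (A (-c))⁻¹ := by simpa using (hA.map_neg c).inv
  induction n generalizing l with
  | zero =>
    obtain ⟨c, rfl⟩ := List.length_eq_one_iff.1 hl
    simpa [horner] using hneg c
  | succ n ih =>
    obtain ⟨c, l, rfl⟩ := List.exists_cons_of_length_eq_add_one hl
    have hlen : l.length = n + 1 := by simpa using hl
    refine EqWithin.mono ?_ (m := 1 + (n + 1)) (by omega)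
    calc horner A y (c :: l)
      _ = A c * (y * horner A y l * y⁻¹) := rfl
      _ ≈[R, 1 + (n + 1)] (A (-c))⁻¹ *
          (y * (y ^ n * (horner A y⁻¹ (l.map Neg.neg).reverse)⁻¹ * (y ^ n)⁻¹) * y⁻¹) :=
        (hneg c).mul ((ih hlen).conj y)
      _ = _ := by
        rw [List.map_cons, List.reverse_cons, horner_append, List.length_reverse,
          List.length_map, hlen]
        simp only [horner, pow_succ', inv_pow]
        group

lemma ActsAs.exists_horner_reverse (h : ActsAs R A y z f g) (hA : IsHomWithinOne R A) {n : ℕ}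
    {l : List M} (hl : l.length = n + 1) :
    ∃ l' : List M, l'.length = n + 1 ∧
      horner A y l ≈[R, 5 * (n + 1) ^ 2] z ^ n * (horner A z⁻¹ l')⁻¹ * (z ^ n)⁻¹ := by
  obtain ⟨l', hlen, hl'⟩ := h.exists_horner hA l
  refine ⟨(l'.map Neg.neg).reverse, by simp [hlen, hl], ?_⟩
  refine (hl'.trans (hA.horner_eqWithin_reverse z (hlen.trans hl))).mono ?_
  rw [hl]
  nlinarith

/-- A Horner word is turned over three times, once in each of the directions `y`, `y⁻¹ x` and
`x⁻¹`; an odd number of turns reverses the order of its letters, and the three translations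
involved compose to the identity. -/
lemma IsHomWithinOne.exists_horner_eqWithin_inv {f₁ g₁ f₂ g₂ f₃ g₃ : M → M}
    (hA : IsHomWithinOne R A) (hxy : ActsAs R A x y f₁ g₁)
    (hyz : ActsAs R A y⁻¹ (y⁻¹ * x) f₂ g₂) (hzx : ActsAs R A (y⁻¹ * x)⁻¹ x⁻¹ f₃ g₃)
    (l : List M) :
    ∃ l' : List M, l'.length = l.length ∧
      horner A x l ≈[R, 17 * l.length ^ 2] (horner A x l')⁻¹ := by
  rcases hl : l.length with _ | n
  · exact ⟨[], rfl, by simpa [List.length_eq_zero_iff.1 hl, horner] using .refl 1⟩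
  obtain ⟨l₁, hlen₁, h₁⟩ := hxy.exists_horner_reverse hA hl
  obtain ⟨l₂, hlen₂, h₂⟩ := hyz.exists_horner_reverse hA hlen₁
  obtain ⟨l₃, hlen₃, h₃⟩ := hzx.exists_horner_reverse hA hlen₂
  rw [inv_inv] at h₃
  set v := y ^ n * (y⁻¹ * x) ^ n * x⁻¹ ^ n with hv
  have hloop : v ≈[R, n ^ 2] 1 := by
    have := ((hxy.comm.symm.inv_comm.mul_pow_of_comm n).mul_left (y ^ n)).mul_right (x⁻¹ ^ n)
    simpa [hv, mul_assoc] using this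
  have hturns : horner A x l ≈[R, 15 * (n + 1) ^ 2] v * (horner A x l₃)⁻¹ * v⁻¹ := by
    refine EqWithin.mono ?_ (m := 5 * (n + 1) ^ 2 + 5 * (n + 1) ^ 2 + 5 * (n + 1) ^ 2) (by omega)
    calc horner A x l
      _ ≈[R, 5 * (n + 1) ^ 2] y ^ n * (horner A y⁻¹ l₁)⁻¹ * (y ^ n)⁻¹ := h₁
      _ ≈[R, 5 * (n + 1) ^ 2] y ^ n *
          ((y⁻¹ * x) ^ n * (horner A (y⁻¹ * x)⁻¹ l₂)⁻¹ * ((y⁻¹ * x) ^ n)⁻¹)⁻¹ * (y ^ n)⁻¹ :=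
        h₂.inv.conj _
      _ = y ^ n * (y⁻¹ * x) ^ n * horner A (y⁻¹ * x)⁻¹ l₂ * (y ^ n * (y⁻¹ * x) ^ n)⁻¹ := by group
      _ ≈[R, 5 * (n + 1) ^ 2] y ^ n * (y⁻¹ * x) ^ n *
          (x⁻¹ ^ n * (horner A x l₃)⁻¹ * (x⁻¹ ^ n)⁻¹) * (y ^ n * (y⁻¹ * x) ^ n)⁻¹ := h₃.conj _
      _ = v * (horner A x l₃)⁻¹ * v⁻¹ := by rw [hv]; group
  refine ⟨l₃, by omega, EqWithin.mono ?_ (m := 15 * (n + 1) ^ 2 + (n ^ 2 + n ^ 2))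
    (by nlinarith)⟩
  refine hturns.trans ?_
  simpa using (hloop.mul_right (horner A x l₃)⁻¹).mul hloop.inv

end AddGroup

end Horner

local notation "α" => FreeGroup.of Gen.a
local notation "σ" => FreeGroup.of Gen.s
local notation "τ" => FreeGroup.of Gen.t

variable {p : ℕ}

/-- The power of the generator `a` with exponent `c`. -/
def aPow (c : ZMod p) : FreeGroup Gen := α ^ c.val

lemma forall_mem_LamRel_map_eq_one_iff {H : Type*} [Group H] (φ : FreeGroup Gen →* H) :
    (∀ r ∈ LamRel p, φ r = 1) ↔
      φ α ^ p = 1 ∧ Commute (φ σ) (φ τ) ∧ Commute (φ τ * φ α * (φ τ)⁻¹) (φ α) ∧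
        φ σ * φ α * (φ σ)⁻¹ = φ τ * φ α * (φ τ)⁻¹ * φ α := by
  simp only [LamRel, Set.forall_mem_insert, Set.mem_singleton_iff, forall_eq, map_mul, map_inv,
    map_pow, commute_iff_eq, mul_inv_eq_iff_eq_mul, one_mul, inv_mul_eq_one,
    mul_assoc _ _ (φ α)]

section Representation

open Polynomial

/-- The polynomial with coefficient list `l`, in increasing degrees. -/
noncomputable def listPoly {S : Type*} [Semiring S] : List S → S[X]
  | [] => 0
  | c :: l => C c + X * listPoly l

lemma coeff_listPoly {S : Type*} [Semiring S] (l : List S) (i : ℕ) :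
    (listPoly l).coeff i = l.getD i 0 := by
  induction l generalizing i with
  | nil => simp [listPoly]
  | cons c l ih => cases i <;> simp [listPoly, coeff_C_succ, ih]

lemma eq_of_listPoly_eq {S : Type*} [Semiring S] {l m : List S} (hlen : l.length = m.length)
    (h : listPoly l = listPoly m) : l = m := by
  refine List.ext_getElem hlen fun i hl hm => ?_
  simpa [coeff_listPoly, hl, hm] using congrArg (coeff · i) h

lemma listPoly_map_neg {S : Type*} [Ring S] (l : List S) :
    listPoly (l.map Neg.neg) = -listPoly l := by
  induction l with
  | nil => simp [listPoly]
  | cons c l ih => simp [listPoly, ih, add_comm]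

lemma toPermHom_conj_addRight {K : Type*} [Ring K] (u : Kˣ) (b : K) :
    MulAction.toPermHom Kˣ K u * Equiv.addRight b * (MulAction.toPermHom Kˣ K u)⁻¹ =
      Equiv.addRight (u * b) := by
  ext x
  simp [smul_add, Units.smul_def]

/-- A monic polynomial, as a unit of the total ring of fractions. -/
noncomputable def monicUnit {S : Type*} [CommRing S] {q : S[X]} (hq : q.Monic) :
    (FractionRing S[X])ˣ :=
  (IsLocalization.map_units (FractionRing S[X]) ⟨q, hq.mem_nonZeroDivisors⟩).unit

lemma coe_monicUnit {S : Type*} [CommRing S] {q : S[X]} (hq : q.Monic) :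
    (monicUnit hq : FractionRing S[X]) = algebraMap S[X] (FractionRing S[X]) q :=
  rfl

/-- The action of `Λ_p` on the total ring of fractions of `(ZMod p)[X]` in which `a` translates by
`1`, `s` multiplies by `X + 1` and `t` multiplies by `X`. -/
noncomputable def affineRep (p : ℕ) :
    FreeGroup Gen →* Equiv.Perm (FractionRing (ZMod p)[X]) :=
  FreeGroup.lift fun
    | .a => Equiv.addRight 1
    | .s => MulAction.toPermHom _ _ (monicUnit (monic_X_add_C (1 : ZMod p)))
    | .t => MulAction.toPermHom _ _ (monicUnit (monic_X (R := ZMod p)))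

lemma affineRep_eq_one_of_mem : ∀ r ∈ LamRel p, affineRep p r = 1 := by
  have hp : (p : FractionRing (ZMod p)[X]) = 0 := by
    rw [← map_natCast (algebraMap (ZMod p) (FractionRing (ZMod p)[X])), ZMod.natCast_self, map_zero]
  simp only [forall_mem_LamRel_map_eq_one_iff, affineRep, FreeGroup.lift_apply_of,
    toPermHom_conj_addRight, Equiv.nsmul_addRight, commute_iff_eq, ← Equiv.addRight_add,
    coe_monicUnit, ← map_mul]
  refine ⟨by simp [hp], congrArg _ (mul_comm _ _), congrArg _ (add_comm _ _), ?_⟩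
  simp [add_comm]

/-- The exponent sums of `s` and of `t`. -/
def exponents : FreeGroup Gen →* Multiplicative ℤ × Multiplicative ℤ :=
  FreeGroup.lift fun
    | .a => 1
    | .s => (.ofAdd 1, 1)
    | .t => (1, .ofAdd 1)

lemma exponents_eq_one_of_mem : ∀ r ∈ LamRel p, exponents r = 1 := by
  simp [forall_mem_LamRel_map_eq_one_iff, exponents, commute_iff_eq]

lemma exponents_horner (l : List (ZMod p)) : exponents (horner aPow τ l) = 1 := by
  induction l with
  | nil => simp [horner]
  | cons c l ih =>
    simp only [horner, map_mul, map_inv, ih]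
    simp [exponents, aPow]

lemma exponents_pow_mul_pow_injective {m n m' n' : ℕ}
    (h : exponents (τ ^ m * σ ^ n) = exponents (τ ^ m' * σ ^ n')) : m = m' ∧ n = n' := by
  simpa [exponents, Prod.ext_iff, ← ofAdd_nsmul, and_comm] using h

lemma affineRep_horner [NeZero p] (l : List (ZMod p)) :
    affineRep p (horner aPow τ l) = Equiv.addRight (algebraMap _ _ (listPoly l)) := by
  induction l with
  | nil => simp [horner, listPoly]
  | cons c l ih =>
    have hcast : c.val • (1 : FractionRing (ZMod p)[X]) = algebraMap _ _ (C c) := by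
      rw [nsmul_one, ← map_natCast (algebraMap (ZMod p)[X] _), ← map_natCast C,
        ZMod.natCast_zmod_val]
    simp only [horner, aPow, map_mul, map_inv, map_pow, ih]
    simp only [affineRep, FreeGroup.lift_apply_of, toPermHom_conj_addRight, Equiv.nsmul_addRight,
      ← Equiv.addRight_add, listPoly, map_add, map_mul, coe_monicUnit,
      hcast, add_comm]

lemma eq_of_affineRep_horner_eq [NeZero p] {l m : List (ZMod p)}
    (hlen : l.length = m.length)
    (h : affineRep p (horner aPow τ l) = affineRep p (horner aPow τ m)) : l = m := by
  refine eq_of_listPoly_eq hlen (IsLocalization.injective (FractionRing (ZMod p)[X]) le_rfl ?_)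
  simpa [affineRep_horner] using Equiv.congr_fun h 0

end Representation

section ShortRelations

open Filter

lemma ActsAs.eventually_of_map_eq {G H M : Type*} [Group G] [Group H] [Finite M] {R : Set G}
    {A : M → G} {y z : G} {f g : M → M} (φ : G →* H) (hker : φ.ker ≤ Subgroup.normalClosure R)
    (hconj : ∀ c, φ y * φ (A c) * (φ y)⁻¹ = φ (A (f c)) * (φ z * φ (A (g c)) * (φ z)⁻¹))
    (hcomm : Commute (φ y) (φ z)) :
    ∀ᶠ n in atTop, ActsAs (areaBall R n) A y z f g := by
  have hconj' (c : M) : ∀ᶠ n in atTop, y * A c * y⁻¹ ≈[R, n] A (f c) * (z * A (g c) * z⁻¹) :=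
    EqWithin.eventually_of_map_eq φ hker (by simpa only [map_mul, map_inv] using hconj c)
  have hcomm' : ∀ᶠ n in atTop, y * z ≈[R, n] z * y :=
    EqWithin.eventually_of_map_eq φ hker (by simpa only [map_mul] using hcomm.eq)
  filter_upwards [eventually_all.2 hconj', hcomm'] with n hn hn'
  exact ⟨fun c => (hn c).of_areaBall, hn'.of_areaBall⟩

section Hom

variable {H : Type*} [Group H] {φ : FreeGroup Gen →* H}

lemma map_aPow_mul [NeZero p] (hφ : ∀ r ∈ LamRel p, φ r = 1) (c d : ZMod p) :
    φ (aPow c) * φ (aPow d) = φ (aPow (c + d)) := by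
  simp only [aPow, map_pow, ← pow_add, ZMod.val_add]
  exact pow_eq_pow_mod _ ((forall_mem_LamRel_map_eq_one_iff φ).1 hφ).1

lemma map_aPow_neg [NeZero p] (hφ : ∀ r ∈ LamRel p, φ r = 1) (c : ZMod p) :
    φ (aPow (-c)) = (φ (aPow c))⁻¹ := by
  rw [eq_inv_iff_mul_eq_one, map_aPow_mul hφ]
  simp [aPow]

lemma map_aPow_one (hφ : ∀ r ∈ LamRel p, φ r = 1) : φ (aPow (1 : ZMod p)) = φ α := by
  have hp := ((forall_mem_LamRel_map_eq_one_iff φ).1 hφ).1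
  rw [aPow, map_pow, ZMod.val_one_eq_one_mod, ← pow_eq_pow_mod 1 hp, pow_one]

lemma map_s_comm_map_t (hφ : ∀ r ∈ LamRel p, φ r = 1) : Commute (φ σ) (φ τ) :=
  ((forall_mem_LamRel_map_eq_one_iff φ).1 hφ).2.1

lemma map_aPow_comm_conj (hφ : ∀ r ∈ LamRel p, φ r = 1) (c : ZMod p) :
    Commute (φ τ * φ (aPow c) * (φ τ)⁻¹) (φ (aPow c)) := by
  have h := ((forall_mem_LamRel_map_eq_one_iff φ).1 hφ).2.2.1
  simpa only [aPow, map_pow, conj_pow] using h.pow_pow c.val c.val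

lemma map_s_conj_aPow (hφ : ∀ r ∈ LamRel p, φ r = 1) (c : ZMod p) :
    φ σ * φ (aPow c) * (φ σ)⁻¹ = φ (aPow c) * (φ τ * φ (aPow c) * (φ τ)⁻¹) := by
  obtain ⟨-, -, hcomm, hconj⟩ := (forall_mem_LamRel_map_eq_one_iff φ).1 hφ
  rw [← (map_aPow_comm_conj hφ c).eq, aPow, map_pow, ← conj_pow, ← conj_pow, hconj, hcomm.mul_pow]

lemma map_t_conj_aPow [NeZero p] (hφ : ∀ r ∈ LamRel p, φ r = 1) (c : ZMod p) :
    φ τ * φ (aPow c) * (φ τ)⁻¹ = φ (aPow (-c)) * (φ σ * φ (aPow c) * (φ σ)⁻¹) := by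
  rw [map_aPow_neg hφ, eq_inv_mul_iff_mul_eq, map_s_conj_aPow hφ]

lemma map_s_inv_conj_aPow [NeZero p] (hφ : ∀ r ∈ LamRel p, φ r = 1) (c : ZMod p) :
    φ σ⁻¹ * φ (aPow c) * (φ σ⁻¹)⁻¹ =
      φ (aPow c) * (φ (σ⁻¹ * τ) * φ (aPow (-c)) * (φ (σ⁻¹ * τ))⁻¹) := by
  simp only [map_aPow_neg hφ, map_mul, map_inv]
  calc (φ σ)⁻¹ * φ (aPow c) * (φ σ)⁻¹⁻¹
    _ = (φ σ)⁻¹ * (φ (aPow c) * (φ τ * φ (aPow c) * (φ τ)⁻¹)) *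
        (φ τ * (φ (aPow c))⁻¹ * (φ τ)⁻¹) * φ σ := by group
    _ = (φ σ)⁻¹ * (φ σ * φ (aPow c) * (φ σ)⁻¹) *
        (φ τ * (φ (aPow c))⁻¹ * (φ τ)⁻¹) * φ σ := by rw [map_s_conj_aPow hφ]
    _ = _ := by group

lemma map_t_inv_mul_s_conj_aPow (hφ : ∀ r ∈ LamRel p, φ r = 1) (c : ZMod p) :
    φ (σ⁻¹ * τ)⁻¹ * φ (aPow c) * (φ (σ⁻¹ * τ)⁻¹)⁻¹ =
      φ (aPow c) * (φ τ⁻¹ * φ (aPow c) * (φ τ⁻¹)⁻¹) := by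
  simp only [map_mul, map_inv]
  calc ((φ σ)⁻¹ * φ τ)⁻¹ * φ (aPow c) * ((φ σ)⁻¹ * φ τ)⁻¹⁻¹
    _ = (φ τ)⁻¹ * (φ σ * φ (aPow c) * (φ σ)⁻¹) * φ τ := by group
    _ = (φ τ)⁻¹ * (φ τ * φ (aPow c) * (φ τ)⁻¹ * φ (aPow c)) * φ τ := by
      rw [map_s_conj_aPow hφ, (map_aPow_comm_conj hφ c).eq]
    _ = _ := by group

end Hom

/-- The relations of `Λ_p` by which Horner words are rewritten: the powers of `a` add up, and `s`,
`t`, `s⁻¹` and `t⁻¹ s` act on them by conjugation as prescribed by `s = 1 + t`. -/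
structure HasShortRelations (p : ℕ) (R : Set (FreeGroup Gen)) : Prop where
  subset_normalClosure : R ⊆ Subgroup.normalClosure (LamRel p)
  isHom : IsHomWithinOne R (aPow (p := p))
  a_eqWithin : α ≈[R, 1] aPow (1 : ZMod p)
  s_actsAs : ActsAs R (aPow (p := p)) σ τ id id
  t_actsAs : ActsAs R (aPow (p := p)) τ σ Neg.neg id
  s_inv_actsAs : ActsAs R (aPow (p := p)) σ⁻¹ (σ⁻¹ * τ) id Neg.neg
  t_inv_mul_s_actsAs : ActsAs R (aPow (p := p)) (σ⁻¹ * τ)⁻¹ τ⁻¹ id id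

lemma exists_hasShortRelations (p : ℕ) [NeZero p] :
    ∃ n, HasShortRelations p (areaBall (LamRel p) n) := by
  set φ := PresentedGroup.mk (LamRel p)
  have hφ : ∀ r ∈ LamRel p, φ r = 1 := fun _ => PresentedGroup.one_of_mem
  have hker : φ.ker ≤ Subgroup.normalClosure (LamRel p) := fun _ => PresentedGroup.mk_eq_one_iff.1
  have hst := map_s_comm_map_t hφ
  have hadd : ∀ᶠ n in atTop, ∀ c d : ZMod p, aPow c * aPow d ≈[LamRel p, n] aPow (c + d) :=
    eventually_all.2 fun c => eventually_all.2 fun d =>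
      EqWithin.eventually_of_map_eq φ hker (by rw [map_mul, map_aPow_mul hφ])
  have ha := EqWithin.eventually_of_map_eq φ hker (map_aPow_one hφ).symm
  have hs := ActsAs.eventually_of_map_eq φ hker (map_s_conj_aPow hφ) hst
  have ht := ActsAs.eventually_of_map_eq φ hker (map_t_conj_aPow hφ) hst.symm
  have hs' := ActsAs.eventually_of_map_eq φ hker (map_s_inv_conj_aPow hφ) (by
    simpa only [map_mul, map_inv] using (Commute.refl _).mul_right hst.inv_left)
  have hts := ActsAs.eventually_of_map_eq φ hker (map_t_inv_mul_s_conj_aPow hφ) (by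
    simpa only [map_mul, map_inv] using
      (hst.inv_left.mul_left (.refl _)).inv_inv)
  obtain ⟨n, hadd, ha, hs, ht, hs', hts⟩ :=
    (hadd.and (ha.and (hs.and (ht.and (hs'.and hts))))).exists
  exact ⟨n, areaBall_subset_normalClosure _ _, ⟨by simp [aPow], fun c d => (hadd c d).of_areaBall⟩,
    ha.of_areaBall, hs, ht, hs', hts⟩

end ShortRelations

namespace HasShortRelations

variable {R : Set (FreeGroup Gen)}

lemma map_eq (h : HasShortRelations p R) {H : Type*} [Group H] {φ : FreeGroup Gen →* H}
    (hφ : ∀ r ∈ LamRel p, φ r = 1) {n : ℕ} {u v : FreeGroup Gen} (huv : u ≈[R, n] v) :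
    φ u = φ v :=
  huv.map_eq φ fun _ hr =>
    (Subgroup.normalClosure_le_normal hφ : _ ≤ φ.ker) (h.subset_normalClosure hr)

variable [NeZero p]

lemma horner_eqWithin_inv_map_neg (h : HasShortRelations p R) (l : List (ZMod p)) :
    horner aPow τ l ≈[R, 17 * l.length ^ 2] (horner aPow τ (l.map Neg.neg))⁻¹ := by
  obtain ⟨l', hlen, hl'⟩ := h.isHom.exists_horner_eqWithin_inv h.t_actsAs h.s_inv_actsAs
    h.t_inv_mul_s_actsAs l
  suffices l' = l.map Neg.neg by rwa [← this]
  refine eq_of_affineRep_horner_eq (by simpa using hlen) ?_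
  have hrep := h.map_eq affineRep_eq_one_of_mem hl'
  rw [map_inv, eq_inv_iff_mul_eq_one, mul_eq_one_iff_eq_inv'] at hrep
  rw [hrep, affineRep_horner, affineRep_horner, listPoly_map_neg, map_neg, Equiv.neg_addRight]

/-- Reversing a concatenation exchanges its two blocks. -/
lemma horner_mul_conj_comm (h : HasShortRelations p R) (l m : List (ZMod p)) :
    horner aPow τ l * (τ ^ l.length * horner aPow τ m * (τ ^ l.length)⁻¹)
      ≈[R, 34 * (l.length + m.length) ^ 2]
        τ ^ l.length * horner aPow τ m * (τ ^ l.length)⁻¹ * horner aPow τ l := by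
  have hl := (h.horner_eqWithin_inv_map_neg l).symm
  have hm := (h.horner_eqWithin_inv_map_neg m).symm
  refine EqWithin.mono ?_
    (m := 17 * (l ++ m).length ^ 2 + (17 * m.length ^ 2 + 17 * l.length ^ 2))
    (by rw [List.length_append]; nlinarith [Nat.zero_le (l.length * m.length)])
  calc horner aPow τ l * (τ ^ l.length * horner aPow τ m * (τ ^ l.length)⁻¹)
    _ = horner aPow τ (l ++ m) := (horner_append _ _ _ _).symm
    _ ≈[R, 17 * (l ++ m).length ^ 2] (horner aPow τ ((l ++ m).map Neg.neg))⁻¹ :=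
      h.horner_eqWithin_inv_map_neg _
    _ = τ ^ l.length * (horner aPow τ (m.map Neg.neg))⁻¹ * (τ ^ l.length)⁻¹ *
        (horner aPow τ (l.map Neg.neg))⁻¹ := by
      rw [List.map_append, horner_append, List.length_map]
      group
    _ ≈[R, 17 * m.length ^ 2 + 17 * l.length ^ 2]
        τ ^ l.length * horner aPow τ m * (τ ^ l.length)⁻¹ * horner aPow τ l :=
      (hm.conj _).mul hl

lemma horner_mul_horner (h : HasShortRelations p R) {k : ℕ} {l m : List (ZMod p)}
    (hl : l.length = 2 ^ k) (hm : m.length = 2 ^ k) :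
    horner aPow τ l * horner aPow τ m ≈[R, 68 * 4 ^ k]
      horner aPow τ (List.zipWith (· + ·) l m) := by
  induction k generalizing l m with
  | zero =>
    obtain ⟨c, rfl⟩ := List.length_eq_one_iff.1 hl
    obtain ⟨d, rfl⟩ := List.length_eq_one_iff.1 hm
    simpa [horner] using (h.isHom.map_add c d).mono (by norm_num : 1 ≤ 68)
  | succ k ih =>
    have halves {l : List (ZMod p)} (hl : l.length = 2 ^ (k + 1)) :
        ∃ l₁ l₂, l₁.length = 2 ^ k ∧ l₂.length = 2 ^ k ∧ l = l₁ ++ l₂ :=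
      ⟨l.take (2 ^ k), l.drop (2 ^ k), by grind, by grind, (List.take_append_drop _ l).symm⟩
    obtain ⟨l₁, l₂, hl₁, hl₂, rfl⟩ := halves hl
    obtain ⟨m₁, m₂, hm₁, hm₂, rfl⟩ := halves hm
    have hcomm := h.horner_mul_conj_comm m₁ l₂
    rw [hm₁, hl₂] at hcomm
    rw [List.zipWith_append (hl₁.trans hm₁.symm), horner_append, horner_append, horner_append,
      List.length_zipWith, hl₁, hm₁, min_self]
    refine EqWithin.mono ?_
      (m := 34 * (2 ^ k + 2 ^ k) ^ 2 + (68 * 4 ^ k + 68 * 4 ^ k)) (le_of_eq ?_)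
    · calc horner aPow τ l₁ * (τ ^ 2 ^ k * horner aPow τ l₂ * (τ ^ 2 ^ k)⁻¹) *
            (horner aPow τ m₁ * (τ ^ 2 ^ k * horner aPow τ m₂ * (τ ^ 2 ^ k)⁻¹))
        _ = horner aPow τ l₁ * (τ ^ 2 ^ k * horner aPow τ l₂ * (τ ^ 2 ^ k)⁻¹ *
            horner aPow τ m₁) * (τ ^ 2 ^ k * horner aPow τ m₂ * (τ ^ 2 ^ k)⁻¹) := by group
        _ ≈[R, 34 * (2 ^ k + 2 ^ k) ^ 2] horner aPow τ l₁ * (horner aPow τ m₁ *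
            (τ ^ 2 ^ k * horner aPow τ l₂ * (τ ^ 2 ^ k)⁻¹)) *
            (τ ^ 2 ^ k * horner aPow τ m₂ * (τ ^ 2 ^ k)⁻¹) :=
          (hcomm.symm.mul_left _).mul_right _
        _ = horner aPow τ l₁ * horner aPow τ m₁ *
            (τ ^ 2 ^ k * (horner aPow τ l₂ * horner aPow τ m₂) * (τ ^ 2 ^ k)⁻¹) := by group
        _ ≈[R, 68 * 4 ^ k + 68 * 4 ^ k] _ := (ih hl₁ hm₁).mul ((ih hl₂ hm₂).conj _)
    · rw [← two_mul, ← pow_succ', ← pow_mul, pow_mul', pow_succ]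
      ring

lemma exists_horner_mul_horner (h : HasShortRelations p R) {k : ℕ} {l m : List (ZMod p)}
    (hl : l.length ≤ 2 ^ k) (hm : m.length ≤ 2 ^ k) :
    ∃ l' : List (ZMod p), l'.length = 2 ^ k ∧
      horner aPow τ l * horner aPow τ m ≈[R, 68 * 4 ^ k] horner aPow τ l' := by
  have hpad {l : List (ZMod p)} (hl : l.length ≤ 2 ^ k) :
      (l ++ List.replicate (2 ^ k - l.length) 0).length = 2 ^ k := by
    simp [hl]
  refine ⟨_, ?_, by simpa only [h.isHom.horner_append_replicate_zero] using
    h.horner_mul_horner (hpad hl) (hpad hm)⟩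
  rw [List.length_zipWith, hpad hl, hpad hm, min_self]

end HasShortRelations

/-- The word `w`, multiplied on the left by `tⁿ sⁿ`, can be brought to the form
`horner aPow t l · tᵘ sᵛ`, of length linear in `n`, at a cost of `c` relators of `R`. The factor
`tⁿ sⁿ` spares us negative exponents when `w` has length at most `n`. -/
def HasNormalForm (p : ℕ) (R : Set (FreeGroup Gen)) (n c : ℕ) (w : FreeGroup Gen) : Prop :=
  ∃ (l : List (ZMod p)) (u v : ℕ), l.length ≤ 4 * n ∧ u ≤ 2 * n ∧ v ≤ 2 * n ∧
    τ ^ n * σ ^ n * w ≈[R, c] horner aPow τ l * (τ ^ u * σ ^ v)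

namespace HasShortRelations

variable {R : Set (FreeGroup Gen)}

lemma hasNormalForm_mk_singleton (h : HasShortRelations p R) (x : Gen × Bool) :
    HasNormalForm p R 1 10 (FreeGroup.mk [x]) := by
  have hcomm := h.s_actsAs.comm
  have hpow {w : FreeGroup Gen} {c : ZMod p} (hw : w ≈[R, 2] aPow c) :
      HasNormalForm p R 1 10 w := by
    obtain ⟨l, hlen, hl⟩ := h.s_actsAs.exists_pow_mul_pow_mul_horner h.isHom 1 1 [c]
    refine ⟨l, 1, 1, by simp_all, by norm_num, by norm_num, ?_⟩
    refine ((hw.mul_left _).trans ?_ : _ ≈[R, 2 + 8] _)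
    simpa [horner] using hl
  rcases x with ⟨_ | _ | _, _ | _⟩
  · exact hpow (c := -1) (h.a_eqWithin.inv.trans (h.isHom.map_neg 1))
  · exact hpow (c := 1) (h.a_eqWithin.mono one_le_two)
  · refine ⟨[], 1, 0, by simp, by norm_num, by norm_num, ?_⟩
    change τ ^ 1 * σ ^ 1 * σ⁻¹ ≈[R, _] 1 * (τ ^ 1 * σ ^ 0)
    simpa using .refl τ
  · refine ⟨[], 1, 2, by simp, by norm_num, by norm_num, ?_⟩
    change τ ^ 1 * σ ^ 1 * σ ≈[R, _] 1 * (τ ^ 1 * σ ^ 2)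
    simpa [pow_two, mul_assoc] using .refl _
  · refine ⟨[], 0, 1, by simp, by norm_num, by norm_num, ?_⟩
    change τ ^ 1 * σ ^ 1 * τ⁻¹ ≈[R, _] 1 * (τ ^ 0 * σ ^ 1)
    have := (hcomm.symm.mul_right τ⁻¹).mono (by norm_num : 1 ≤ 10)
    simpa using this
  · refine ⟨[], 2, 1, by simp, by norm_num, by norm_num, ?_⟩
    change τ ^ 1 * σ ^ 1 * τ ≈[R, _] 1 * (τ ^ 2 * σ ^ 1)
    have := (hcomm.mul_left τ).mono (by norm_num : 1 ≤ 10)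
    simpa [pow_two, mul_assoc] using this

lemma exists_horner_mul_horner_mul_pow_mul_pow (h : HasShortRelations p R) {n c : ℕ}
    {w w' : FreeGroup Gen} (hw : HasNormalForm p R n c w) (hw' : HasNormalForm p R n c w') :
    ∃ (l m : List (ZMod p)) (u v : ℕ), l.length ≤ 8 * n ∧ m.length ≤ 8 * n ∧
      u ≤ 4 * n ∧ v ≤ 4 * n ∧ τ ^ (2 * n) * σ ^ (2 * n) * (w * w') ≈[R, 2 * c + 77 * n ^ 2]
        horner aPow τ l * horner aPow τ m * (τ ^ u * σ ^ v) := by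
  obtain ⟨l, u, v, hl, hu, hv, hw⟩ := hw
  obtain ⟨m, u', v', hm, hu', hv', hw'⟩ := hw'
  obtain ⟨l', hlen_l, hl'⟩ := h.s_actsAs.exists_pow_mul_pow_mul_horner h.isHom n n l
  obtain ⟨m', hlen_m, hm'⟩ := h.s_actsAs.exists_pow_mul_pow_mul_horner h.isHom u v m
  refine ⟨l', m', u + u', v + v', by omega, by omega, by omega, by omega, ?_⟩
  have hpow := EqWithin.pow_mul_pow_mul_pow_mul_pow h.s_actsAs.comm
  set x := τ ^ n * σ ^ n
  set y := τ ^ u * σ ^ v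
  set y' := τ ^ u' * σ ^ v'
  have hxy : x * y ≈[R, n * u + v * n] y * x := .pow_mul_pow_comm h.s_actsAs.comm n n u v
  refine EqWithin.mono ?_ (m := n * n + c + 4 * n * (l.length + n) + (n * u + v * n) + c +
    4 * v * (m.length + v) + v * u') ?_
  · calc τ ^ (2 * n) * σ ^ (2 * n) * (w * w')
      _ = τ ^ (n + n) * σ ^ (n + n) * (w * w') := by rw [two_mul]
      _ ≈[R, n * n] x * x * (w * w') := (hpow n n n n).symm.mul_right _
      _ = x * (x * w) * w' := by group
      _ ≈[R, c] x * (horner aPow τ l * y) * w' := (hw.mul_left _).mul_right _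
      _ = x * horner aPow τ l * (y * w') := by group
      _ ≈[R, 4 * n * (l.length + n)] horner aPow τ l' * x * (y * w') := hl'.mul_right _
      _ = horner aPow τ l' * (x * y) * w' := by group
      _ ≈[R, n * u + v * n] horner aPow τ l' * (y * x) * w' := (hxy.mul_left _).mul_right _
      _ = horner aPow τ l' * y * (x * w') := by group
      _ ≈[R, c] horner aPow τ l' * y * (horner aPow τ m * y') := hw'.mul_left _
      _ = horner aPow τ l' * (y * horner aPow τ m) * y' := by group
      _ ≈[R, 4 * v * (m.length + v)] horner aPow τ l' * (horner aPow τ m' * y) * y' :=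
        (hm'.mul_left _).mul_right _
      _ = horner aPow τ l' * horner aPow τ m' * (y * y') := by group
      _ ≈[R, v * u'] horner aPow τ l' * horner aPow τ m' * (τ ^ (u + u') * σ ^ (v + v')) :=
        (hpow u v u' v').mul_left _
  · nlinarith [Nat.mul_le_mul hv hv, Nat.mul_le_mul hv hu', Nat.mul_le_mul hv hm,
      Nat.mul_le_mul_left n hl, Nat.mul_le_mul_left n hu, Nat.mul_le_mul_left n hv]

variable [NeZero p]

lemma hasNormalForm_mul (h : HasShortRelations p R) {k c : ℕ} {w w' : FreeGroup Gen}
    (hw : HasNormalForm p R (2 ^ k) c w) (hw' : HasNormalForm p R (2 ^ k) c w') :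
    HasNormalForm p R (2 ^ (k + 1)) (2 * c + 4429 * 4 ^ k) (w * w') := by
  obtain ⟨l, m, u, v, hl, hm, hu, hv, hlm⟩ := h.exists_horner_mul_horner_mul_pow_mul_pow hw hw'
  have h8 : 2 ^ (k + 3) = 8 * 2 ^ k := by ring
  obtain ⟨r, hlen, hr⟩ := h.exists_horner_mul_horner (hl.trans_eq h8.symm) (hm.trans_eq h8.symm)
  refine ⟨r, u, v, by omega, by omega, by omega, ?_⟩
  rw [pow_succ']
  have h4 : (2 ^ k) ^ 2 = 4 ^ k := by rw [← pow_mul, pow_mul']; norm_num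
  refine (hlm.trans (hr.mul_right _)).mono (le_of_eq ?_)
  rw [h4]
  ring

/-- The constant is chosen so that `2 * 2215 + 4429 ≤ 4 * 2215`. -/
lemma hasNormalForm_mk (h : HasShortRelations p R) {k : ℕ} {L : List (Gen × Bool)}
    (hL : L.length ≤ 2 ^ k) : HasNormalForm p R (2 ^ k) (2215 * 4 ^ k) (FreeGroup.mk L) := by
  induction k generalizing L with
  | zero =>
    rcases L with _ | ⟨x, _ | _⟩
    · refine ⟨[], 1, 1, by simp, by simp, by simp, ?_⟩
      simpa [horner, ← FreeGroup.one_eq_mk] using .refl _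
    · obtain ⟨l, u, v, hl, hu, hv, hw⟩ := h.hasNormalForm_mk_singleton x
      exact ⟨l, u, v, hl, hu, hv, hw.mono (by norm_num)⟩
    · simp at hL
  | succ k ih =>
    rw [← L.take_append_drop (2 ^ k), ← FreeGroup.mul_mk]
    have hmul := h.hasNormalForm_mul (ih (L := L.take (2 ^ k)) (by simp))
      (ih (L := L.drop (2 ^ k)) (by grind))
    obtain ⟨l, u, v, hl, hu, hv, hw⟩ := hmul
    exact ⟨l, u, v, hl, hu, hv, hw.mono (by rw [pow_succ]; omega)⟩

lemma mem_areaBall_of_norm_le (h : HasShortRelations p R) {k : ℕ} {w : FreeGroup Gen}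
    (hw : PresentedGroup.mk (LamRel p) w = 1) (hk : w.norm ≤ 2 ^ k) :
    w ∈ areaBall R (2215 * 4 ^ k) := by
  obtain ⟨l, u, v, -, -, -, hl⟩ := h.hasNormalForm_mk hk
  rw [FreeGroup.mk_toWord] at hl
  have hmap {H : Type} [Group H] (φ : FreeGroup Gen →* H) (hφ : ∀ r ∈ LamRel p, φ r = 1) :
      φ (τ ^ 2 ^ k * σ ^ 2 ^ k) = φ (horner aPow τ l) * φ (τ ^ u * σ ^ v) := by
    have hφw : φ w = 1 :=
      (Subgroup.normalClosure_le_normal hφ : _ ≤ φ.ker) (PresentedGroup.mk_eq_one_iff.1 hw)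
    simpa only [map_mul φ _ w, hφw, mul_one, map_mul φ (horner _ _ _)] using h.map_eq hφ hl
  obtain ⟨rfl, rfl⟩ : 2 ^ k = u ∧ 2 ^ k = v :=
    exponents_pow_mul_pow_injective <| by
      simpa only [exponents_horner, one_mul] using hmap exponents exponents_eq_one_of_mem
  have hl_zero : l = List.replicate l.length 0 := by
    refine eq_of_affineRep_horner_eq (by simp) ?_
    rw [h.isHom.horner_replicate_zero, map_one]
    exact right_eq_mul.1 (hmap (affineRep p) affineRep_eq_one_of_mem)
  rw [hl_zero, h.isHom.horner_replicate_zero, one_mul] at hl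
  exact hl.mem_areaBall_of_mul_left

end HasShortRelations

lemma exists_forall_mem_areaBall (p : ℕ) [NeZero p] :
    ∃ n, ∀ w, PresentedGroup.mk (LamRel p) w = 1 →
      w ∈ areaBall (LamRel p) (n * (w.norm ^ 2 + 1)) := by
  obtain ⟨n, h⟩ := exists_hasShortRelations p
  refine ⟨n * (2215 * 8), fun w hw => ?_⟩
  obtain ⟨k, hk, hk'⟩ : ∃ k, w.norm ≤ 2 ^ k ∧ 2 ^ k ≤ 2 * (w.norm + 1) :=
    ⟨Nat.log 2 w.norm + 1, (Nat.lt_pow_succ_log_self one_lt_two _).le, by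
      rw [pow_succ']
      exact Nat.mul_le_mul_left 2 (Nat.pow_log_le_add_one 2 _)⟩
  have h4 : 4 ^ k ≤ 8 * (w.norm ^ 2 + 1) := calc
    4 ^ k = (2 ^ k) ^ 2 := by rw [← pow_mul, pow_mul']; norm_num
    _ ≤ (2 * (w.norm + 1)) ^ 2 := Nat.pow_le_pow_left hk' 2
    _ ≤ 8 * (w.norm ^ 2 + 1) := by nlinarith [two_mul_le_add_sq w.norm 1]
  refine areaBall_mono _ ?_ (areaBall_areaBall_subset _ _ _ (h.mem_areaBall_of_norm_le hw hk))
  calc n * (2215 * 4 ^ k) ≤ n * (2215 * (8 * (w.norm ^ 2 + 1))) := by gcongr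
    _ = n * (2215 * 8) * (w.norm ^ 2 + 1) := by ring

end Baumslag

theorem stmt14_general (p : ℕ) (hp : p ≠ 0) :
    ∃ C : ℝ, ∀ w : FreeGroup Gen,
      PresentedGroup.mk (LamRel p) w = 1 →
      ∃ L : List (FreeGroup Gen × FreeGroup Gen),
        (L.length : ℝ) ≤ C * (w.norm : ℝ) ^ 2 + C ∧
        (∀ q ∈ L, q.2 ∈ LamRel p ∨ q.2⁻¹ ∈ LamRel p) ∧
        w = (L.map fun q => q.1 * q.2 * q.1⁻¹).prod := by
  have : NeZero p := ⟨hp⟩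
  obtain ⟨n, hn⟩ := exists_forall_mem_areaBall p
  refine ⟨n, fun w hw => ?_⟩
  obtain ⟨L, hlen, hL⟩ := exists_list_of_mem_areaBall (hn w hw)
  refine ⟨L, ?_, hL⟩
  rw [← mul_add_one]
  exact_mod_cast hlen

/-- Theorem B of Cornulier–Tessera: Baumslag's group `Λ_p` has
quadratic Dehn function with respect to its standard presentation. -/
theorem stmt14 (p : ℕ) (hp : p.Prime) :
    ∃ C : ℝ, ∀ w : FreeGroup Gen,
      PresentedGroup.mk (LamRel p) w = 1 →
      ∃ L : List (FreeGroup Gen × FreeGroup Gen),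
        (L.length : ℝ) ≤ C * (w.norm : ℝ) ^ 2 + C ∧
        (∀ q ∈ L, q.2 ∈ LamRel p ∨ q.2⁻¹ ∈ LamRel p) ∧
        w = (L.map fun q => q.1 * q.2 * q.1⁻¹).prod :=
  stmt14_general p hp.ne_zero
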